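/- Let N ≥ 2 be an integer and let g ∈ ℂ[[t]] be the unique power series with constant coefficient 1 satisfying g(t·(1+N·t)⁻¹) = g(t)·(1−t²). Then the normalized Yang R-matrix satisfies the unitarity property R̄(u)·R̄(−u) = 1; concretely, in End(ℂ^N) ⊗ End(ℂ^N) with entries in the formal power series ring ℂ[[h,t]] one has ( g(h·t)·(1 − h·t·P) ) · ( g(−h·t)·(1 + h·t·P) ) = 1, where g(±h·t) denotes the series obtained from g by substituting ±h·t for t. Equivalently, g(t)·g(−t)·(1−t²) = 1 in ℂ[[t]]. -/

import Mathlib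

/-- Composition `f ↦ f(a)` of a one-variable formal power series with a power series `a`
(intended for `a` with zero constant coefficient), defined coefficientwise. -/
noncomputable def PowerSeries.substC (a f : PowerSeries ℂ) : PowerSeries ℂ :=
  PowerSeries.mk fun m =>
    ∑ n ∈ Finset.range (m + 1), PowerSeries.coeff n f * PowerSeries.coeff m (a ^ n)

/-- Substitution of a two-variable power series `a ∈ ℂ[[h,t]]` (intended with zero
constant coefficient) into a one-variable power series `f`, giving `f(a) = ∑ₙ fₙ aⁿ`,
defined coefficientwise: the coefficient of a monomial `d` is `∑_{n ≤ deg d} fₙ · coeff_d(aⁿ)`. -/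
noncomputable def substM (a : MvPowerSeries (Fin 2) ℂ) (f : PowerSeries ℂ) :
    MvPowerSeries (Fin 2) ℂ :=
  fun d => ∑ n ∈ Finset.range (d.sum (fun _ k => k) + 1),
    PowerSeries.coeff n f * MvPowerSeries.coeff d (a ^ n)

/-- The permutation operator `P : x ⊗ y ↦ y ⊗ x` on `ℂ^N ⊗ ℂ^N`, as a matrix with
entries in `ℂ[[h,t]]`: `P_{(i,j),(k,l)} = δ_{i,l} δ_{j,k}`. -/
noncomputable def Pmat (N : ℕ) :
    Matrix (Fin N × Fin N) (Fin N × Fin N) (MvPowerSeries (Fin 2) ℂ) :=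
  Matrix.of fun p q => if p.1 = q.2 ∧ p.2 = q.1 then 1 else 0

/-!
Put `f(u) = g(u) g(-u) (1 - u⁻²)`. The functional equation at `u` and at `-u - N` reads
`g(u + N) = g(u) (1 - u⁻²)` and `g(-u) = g(-u - N) (1 - (u + N)⁻²)`, whence `f(u + N) = f(u)`.
A series in `u⁻¹` that is invariant under a nonzero translation is constant, because a leading term
`a u⁻ⁿ` with `n ≥ 1` changes by `-n N a u⁻ⁿ⁻¹`; so `f = f(∞) = 1`. Since `P² = 1`, the product
`R̄(u) R̄(-u)` is the scalar `f(u / h)`.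
-/

section Coefficients

open PowerSeries

variable {R S τ : Type*} [CommRing R] [CommRing S] [Algebra R S]

lemma mvCoeff_subst_eq_sum_range {a : MvPowerSeries τ S} (ha : MvPowerSeries.constantCoeff a = 0)
    (f : R⟦X⟧) (d : τ →₀ ℕ) :
    MvPowerSeries.coeff d (subst a f) =
      ∑ n ∈ Finset.range (d.degree + 1), coeff n f • MvPowerSeries.coeff d (a ^ n) := by
  rw [coeff_subst (HasSubst.of_constantCoeff_zero ha)]
  refine finsum_eq_sum_of_support_subset _ fun n hn ↦ ?_
  by_contra hnd
  have hlt : d.degree < n := by simpa using hnd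
  have hcoeff : MvPowerSeries.coeff d (a ^ n) = 0 :=
    MvPowerSeries.coeff_of_lt_order <| (Nat.cast_lt.mpr hlt).trans_le
      (MvPowerSeries.le_order_pow_of_constantCoeff_eq_zero n ha)
  exact hn (by simp only [hcoeff, smul_zero])

lemma coeff_subst_eq_sum_range {b : S⟦X⟧} (hb : constantCoeff b = 0) (f : R⟦X⟧) (m : ℕ) :
    coeff m (subst b f) = ∑ n ∈ Finset.range (m + 1), coeff n f • coeff m (b ^ n) := by
  have h := mvCoeff_subst_eq_sum_range hb f (Finsupp.single () m)
  rwa [Finsupp.degree_single] at h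

lemma constantCoeff_subst_eq_algebraMap {b : S⟦X⟧} (hb : constantCoeff b = 0) (f : R⟦X⟧) :
    constantCoeff (subst b f) = algebraMap R S (constantCoeff f) := by
  rw [← coeff_zero_eq_constantCoeff_apply, coeff_subst_eq_sum_range hb, Finset.sum_range_one,
    pow_zero, coeff_zero_one, Algebra.smul_def, mul_one, coeff_zero_eq_constantCoeff_apply]

lemma coeff_one_subst {b : S⟦X⟧} (hb : constantCoeff b = 0) (f : R⟦X⟧) :
    coeff 1 (subst b f) = coeff 1 f • coeff 1 b := by
  simp [coeff_subst_eq_sum_range hb, Finset.sum_range_succ, coeff_one]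

lemma substC_eq_subst {a : ℂ⟦X⟧} (ha : constantCoeff a = 0) (f : ℂ⟦X⟧) :
    substC a f = subst a f := by
  ext m
  simp only [substC, coeff_mk, coeff_subst_eq_sum_range ha, smul_eq_mul]

lemma substM_eq_subst {a : MvPowerSeries (Fin 2) ℂ} (ha : MvPowerSeries.constantCoeff a = 0)
    (f : ℂ⟦X⟧) : substM a f = subst a f :=
  MvPowerSeries.ext fun d ↦ (mvCoeff_subst_eq_sum_range ha f d).symm

end Coefficients

section Translation

open PowerSeries

variable {R : Type*} [CommRing R]

/-- The series `t (1 + c t)⁻¹`, that is, the translation `u ↦ u + c` written in the coordinate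
`t = u⁻¹` at infinity: composing with it turns `g(u)` into `g(u + c)`. -/
noncomputable def translation (c : R) : R⟦X⟧ :=
  X * invOfUnit (1 + c • X) 1

lemma translation_eq_X_mul_inv {K : Type*} [Field K] (c : K) :
    translation c = X * (1 + c • X)⁻¹ := by
  rw [translation, invOfUnit_eq' _ _ (by simp)]

lemma constantCoeff_translation (c : R) : constantCoeff (translation c) = 0 := by
  simp [translation]

lemma hasSubst_translation (c : R) : HasSubst (translation c) :=
  .of_constantCoeff_zero' (constantCoeff_translation c)

lemma hasSubst_neg_translation (c : R) : HasSubst (-translation c) :=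
  .of_constantCoeff_zero' (by rw [map_neg, constantCoeff_translation, neg_zero])

lemma one_add_smul_X_mul_translation (c : R) : (1 + c • X) * translation c = X := by
  rw [translation, mul_left_comm, mul_invOfUnit _ _ (by simp), mul_one]

lemma coeff_one_invOfUnit_one_add_smul_X (c : R) :
    coeff 1 (invOfUnit (1 + c • X) 1) = -c := by
  have h₀ : constantCoeff (1 + c • (X : R⟦X⟧)) = 1 := by simp
  have h₁ : coeff 1 (1 + c • (X : R⟦X⟧)) = c := by simp [coeff_one]
  have h := congrArg (coeff 1) (mul_invOfUnit (1 + c • X) 1 h₀)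
  rw [coeff_one_mul, h₀, h₁, constantCoeff_invOfUnit, coeff_one, if_neg one_ne_zero, inv_one,
    Units.val_one] at h
  linear_combination h

lemma subst_neg {σ : Type*} {a : MvPowerSeries σ R} (ha : HasSubst a) (f : R⟦X⟧) :
    subst a (-f) = -subst a f := by
  rw [← coe_substAlgHom ha, map_neg]

lemma subst_one {σ : Type*} {a : MvPowerSeries σ R} (ha : HasSubst a) :
    subst a (1 : R⟦X⟧) = 1 := by
  rw [← coe_substAlgHom ha, map_one]

lemma subst_subst_neg_X {σ : Type*} {a : MvPowerSeries σ R} (ha : HasSubst a) (f : R⟦X⟧) :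
    subst a (subst (-X : R⟦X⟧) f) = subst (-a) f := by
  rw [subst_comp_subst_apply (.of_constantCoeff_zero' (by simp)) ha, subst_neg ha, subst_X ha]

/-- In the coordinate `u⁻¹` this is `(-u - c) + c = -u`. -/
lemma subst_neg_translation_translation (c : R) :
    subst (-translation c) (translation c) = -X := by
  have hs := hasSubst_neg_translation c
  have h := congrArg (subst (-translation c)) (one_add_smul_X_mul_translation c)
  rw [subst_mul hs, subst_add hs, subst_one hs, subst_smul hs, subst_X hs] at h
  have hτ := one_add_smul_X_mul_translation c
  simp only [smul_eq_C_mul] at h hτ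
  set y : R⟦X⟧ := subst (-translation c) (translation c)
  linear_combination (1 + C c * X) * h + (C c * y - 1) * hτ

theorem eq_C_of_subst_X_mul_eq_self [IsAddTorsionFree R] {v f : R⟦X⟧}
    (hv₀ : constantCoeff v = 1) (hv₁ : IsRegular (coeff 1 v)) (hf : subst (X * v) f = f) :
    f = C (constantCoeff f) := by
  have hXv₀ : constantCoeff (X * v) = 0 := by simp
  have hXv := HasSubst.of_constantCoeff_zero' hXv₀
  by_contra hne
  set d := f - C (constantCoeff f) with hd
  set n := d.order.toNat
  set p := divXPowOrder d
  have hdp : X ^ n * p = d := X_pow_order_mul_divXPowOrder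
  have hp₀ : constantCoeff p ≠ 0 :=
    constantCoeff_divXPowOrder_eq_zero_iff.not.mpr (sub_ne_zero.mpr hne)
  have hn : n ≠ 0 := by
    intro hn
    apply hp₀
    simpa [hn, hd] using congrArg constantCoeff hdp
  have hinv : v ^ n * subst (X * v) p = p := by
    have h : subst (X * v) d = d := by rw [hd, subst_sub hXv, hf, subst_C]; rfl
    rw [← hdp, subst_mul hXv, subst_pow hXv, subst_X hXv, mul_pow, mul_assoc] at h
    exact X_pow_mul_cancel h
  have hcoeff : n • (coeff 1 v * constantCoeff p) = 0 := by
    have h := congrArg (coeff 1) hinv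
    rw [coeff_one_mul, coeff_one_pow, map_pow, hv₀, constantCoeff_subst_eq_algebraMap hXv₀,
      coeff_one_subst hXv₀, coeff_succ_X_mul, coeff_zero_eq_constantCoeff_apply, hv₀] at h
    simp only [one_pow, mul_one, Algebra.algebraMap_self, RingHom.id_apply, smul_eq_mul] at h
    rw [nsmul_eq_mul]
    linear_combination h
  exact hp₀ (hv₁.left.mul_left_eq_zero_iff.mp ((nsmul_eq_zero_iff_right hn).mp hcoeff))

theorem eq_C_of_subst_translation_eq_self [IsAddTorsionFree R] {c : R} (hc : IsRegular c)
    {f : R⟦X⟧} (hf : subst (translation c) f = f) : f = C (constantCoeff f) :=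
  have hneg : IsRegular (-c) := neg_one_mul c ▸ isUnit_one.neg.isRegular.mul hc
  eq_C_of_subst_X_mul_eq_self (by simp)
    (by rwa [coeff_one_invOfUnit_one_add_smul_X]) hf

theorem subst_translation_mul_subst_neg_X {c : R} {g q : R⟦X⟧}
    (hq : subst (-X : R⟦X⟧) q = q) (hg : subst (translation c) g = g * q) :
    subst (translation c) (g * subst (-X : R⟦X⟧) g * q) = g * subst (-X : R⟦X⟧) g * q := by
  have hτ := hasSubst_translation c
  have hτ' := hasSubst_neg_translation c
  have hq_even : subst (-translation c) q = subst (translation c) q := by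
    rw [← subst_subst_neg_X hτ, hq]
  have hg_neg : subst (-X : R⟦X⟧) g = subst (-translation c) g * subst (translation c) q := by
    rw [← hq_even, ← subst_mul hτ', ← hg, subst_comp_subst_apply hτ hτ',
      subst_neg_translation_translation]
  calc subst (translation c) (g * subst (-X : R⟦X⟧) g * q)
      = g * q * (subst (-translation c) g * subst (translation c) q) := by
        rw [subst_mul hτ, subst_mul hτ, hg, subst_subst_neg_X hτ, mul_assoc]
    _ = g * subst (-X : R⟦X⟧) g * q := by rw [← hg_neg, mul_right_comm]

lemma subst_one_sub_X_sq {σ : Type*} {a : MvPowerSeries σ R} (ha : HasSubst a) :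
    subst a (1 - X ^ 2 : R⟦X⟧) = 1 - a ^ 2 := by
  rw [subst_sub ha, subst_one ha, subst_pow ha, subst_X ha]

theorem mul_subst_neg_X_mul_one_sub_X_sq [IsAddTorsionFree R] {c : R} (hc : IsRegular c)
    {g : R⟦X⟧} (hg₀ : constantCoeff g = 1)
    (hg : subst (translation c) g = g * (1 - X ^ 2)) :
    g * subst (-X : R⟦X⟧) g * (1 - X ^ 2) = 1 := by
  have hX₀ : constantCoeff (-X : R⟦X⟧) = 0 := by simp
  have heven : subst (-X : R⟦X⟧) (1 - X ^ 2 : R⟦X⟧) = 1 - X ^ 2 := by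
    rw [subst_one_sub_X_sq (.of_constantCoeff_zero' hX₀), neg_sq]
  have hg_neg₀ : constantCoeff (subst (-X : R⟦X⟧) g) = 1 := by
    rw [constantCoeff_subst_eq_algebraMap hX₀, hg₀, map_one]
  rw [eq_C_of_subst_translation_eq_self hc (subst_translation_mul_subst_neg_X heven hg)]
  simp [hg₀, hg_neg₀]

end Translation

section Unitarity

open PowerSeries

variable {R σ A : Type*} [CommRing R] [Ring A] [Algebra (MvPowerSeries σ R) A]

/-- The normalized Yang R-matrix `R̄ = g(a) (1 - a P)`. The paper's `R̄(u)` is the case `a = h t`,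
`t = u⁻¹`, and `R̄(-u)` is the case `a = -h t`. -/
noncomputable def normalizedYangR (g : R⟦X⟧) (P : A) (a : MvPowerSeries σ R) : A :=
  subst a g • (1 - a • P)

lemma one_sub_smul_mul_one_add_smul {S B : Type*} [CommRing S] [Ring B] [Algebra S B] {P : B}
    (hP : P * P = 1) (a : S) : (1 - a • P) * (1 + a • P) = (1 - a ^ 2) • (1 : B) := by
  rw [← (Commute.one_left (a • P)).mul_self_sub_mul_self_eq', smul_mul_smul_comm, hP, one_mul,
    sub_smul, one_smul, sq]

theorem normalizedYangR_mul_neg {g : R⟦X⟧} (hg : g * subst (-X : R⟦X⟧) g * (1 - X ^ 2) = 1)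
    {P : A} (hP : P * P = 1) {a : MvPowerSeries σ R} (ha : HasSubst a) :
    normalizedYangR g P a * normalizedYangR g P (-a) = 1 := by
  have hscalar : subst a g * subst (-a) g * (1 - a ^ 2) = 1 := by
    rw [← subst_subst_neg_X ha, ← subst_one_sub_X_sq ha, ← subst_mul ha, ← subst_mul ha, hg,
      subst_one ha]
  rw [normalizedYangR, normalizedYangR, neg_smul, sub_neg_eq_add, smul_mul_smul_comm,
    one_sub_smul_mul_one_add_smul hP, smul_smul, hscalar, one_smul]

lemma Pmat_eq_permMatrix (N : ℕ) :
    Pmat N = Equiv.Perm.permMatrix _ (Equiv.prodComm (Fin N) (Fin N)) := by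
  ext p q : 2
  simp [Pmat, Equiv.Perm.permMatrix, PEquiv.toMatrix_apply, Prod.ext_iff, and_comm]

lemma Pmat_mul_self (N : ℕ) : Pmat N * Pmat N = 1 := by
  have hswap : Equiv.prodComm (Fin N) (Fin N) * Equiv.prodComm (Fin N) (Fin N) = 1 :=
    Equiv.ext fun _ ↦ rfl
  rw [Pmat_eq_permMatrix, ← Matrix.permMatrix_mul, hswap, Matrix.permMatrix_one]

theorem statement2_general [IsAddTorsionFree R] {c : R} (hc : IsRegular c) {g : R⟦X⟧}
    (hg₀ : constantCoeff g = 1) (hg : subst (translation c) g = g * (1 - X ^ 2))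
    {P : A} (hP : P * P = 1) {a : MvPowerSeries σ R} (ha : HasSubst a) :
    normalizedYangR g P a * normalizedYangR g P (-a) = 1 ∧
      g * subst (-X : R⟦X⟧) g * (1 - X ^ 2) = 1 :=
  have hscalar := mul_subst_neg_X_mul_one_sub_X_sq hc hg₀ hg
  ⟨normalizedYangR_mul_neg hscalar hP ha, hscalar⟩

end Unitarity

/-- Unitarity of the normalized Yang R-matrix: if `g ∈ ℂ[[t]]` has constant coefficient `1`
and satisfies `g(t(1+Nt)⁻¹) = g(t)(1−t²)`, then in `End(ℂ^N) ⊗ End(ℂ^N)` with entries in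
`ℂ[[h,t]]` (variables `h = X 0`, `t = X 1`) one has
`(g(h·t)(1 − h·t·P)) · (g(−h·t)(1 + h·t·P)) = 1`; equivalently `g(t)·g(−t)·(1−t²) = 1`. -/
theorem statement2 (N : ℕ) (hN : 2 ≤ N) (g : PowerSeries ℂ)
    (hg1 : PowerSeries.constantCoeff g = 1)
    (hg : PowerSeries.substC (PowerSeries.X * (1 + (N : ℂ) • PowerSeries.X)⁻¹) g
        = g * (1 - PowerSeries.X ^ 2)) :
    (substM (MvPowerSeries.X 0 * MvPowerSeries.X 1) g •
        ((1 : Matrix (Fin N × Fin N) (Fin N × Fin N) (MvPowerSeries (Fin 2) ℂ))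
          - (MvPowerSeries.X 0 * MvPowerSeries.X 1 : MvPowerSeries (Fin 2) ℂ) • Pmat N)) *
      (substM (-(MvPowerSeries.X 0 * MvPowerSeries.X 1)) g •
        ((1 : Matrix (Fin N × Fin N) (Fin N × Fin N) (MvPowerSeries (Fin 2) ℂ))
          + (MvPowerSeries.X 0 * MvPowerSeries.X 1 : MvPowerSeries (Fin 2) ℂ) • Pmat N)) = 1
    ∧ g * PowerSeries.substC (-PowerSeries.X) g * (1 - PowerSeries.X ^ 2) = 1 := by
  rw [← translation_eq_X_mul_inv, substC_eq_subst (constantCoeff_translation _)] at hg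
  rw [substM_eq_subst (by simp), substM_eq_subst (by simp), substC_eq_subst (by simp)]
  simpa only [normalizedYangR, neg_smul, sub_neg_eq_add] using
    statement2_general (σ := Fin 2) (a := .X 0 * .X 1) (.of_ne_zero (Nat.cast_ne_zero.mpr (by lia)))
      hg1 hg (Pmat_mul_self N) (.of_constantCoeff_zero (by simp))
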